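/- arXiv:math/0605559 — 2 statements merged into one kernel-verified Lean document; each statement's English description precedes it below -/
import Mathlib

section
/- For 1 ≤ k ≤ n, the connected component Γₖ of {λ ∈ ℝⁿ : σₖ(λ) > 0} containing the positive cone Γₙ = {λ : λᵢ > 0 for all i} equals {λ ∈ ℝⁿ : σ₁(λ) > 0, σ₂(λ) > 0, …, σₖ(λ) > 0}, and Γₖ is an open convex symmetric cone with vertex at the origin satisfying Γₙ ⊆ Γₖ ⊆ Γ₁ = {λ : Σλᵢ > 0}. -/
/-!
The heart of the matter is the convexity of the cone `σ₁ > 0, …, σₖ > 0`, which we get from the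
Marcus–Lopes inequality: the ratios `qₖ = σₖ₊₁ / σₖ` are superadditive on it. Write `qₖ(x; i)` for
the ratio computed without the coordinate `xᵢ`. Euler's identity gives
`(k + 2) qₖ₊₁(x) = ∑ᵢ (xᵢ - xᵢ² / (xᵢ + qₖ(x; i)))`, and `(a, α) ↦ a² / α` is subadditive and
decreasing in `α > 0`, so superadditivity passes from `qₖ` to `qₖ₊₁`.

Newton's inequality `σₖ σₖ₊₂ ≤ σₖ₊₁²` shows that deleting a coordinate costs only one degree of
positivity, and that `σⱼ₊₁ ≤ σⱼ σ₁` on the cone. The latter persists on the closure, where it makes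
positivity of `σₖ` descend to all lower degrees. Hence the cone is relatively closed in `{σₖ > 0}`;
being also open and convex, it is a connected component.
-/

open scoped BigOperators
noncomputable section

/-- The `k`-th elementary symmetric function of `lam`. -/
def esymm (n k : ℕ) (lam : Fin n → ℝ) : ℝ :=
  ∑ s ∈ Finset.univ.powersetCard k, ∏ i ∈ s, lam i

section RealRooted

open Polynomial

/-- **Laguerre's inequality**. -/
theorem eval_mul_eval_derivative_derivative_le_sq {K : Type*} [Field K] [LinearOrder K]
    [IsStrictOrderedRing K] {P : K[X]} (hP : P.Splits) (x : K) :
    P.eval x * (derivative (derivative P)).eval x ≤ (derivative P).eval x ^ 2 := by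
  induction hP using Submonoid.closure_induction with
  | mem P hP => rcases hP with ⟨a, rfl⟩ | ⟨a, rfl⟩ <;> simp
  | one => simp
  | mul P Q _ _ hP hQ =>
    simp only [derivative_mul, derivative_add, eval_add, eval_mul]
    linarith [mul_le_mul_of_nonneg_left hP (sq_nonneg (Q.eval x)),
      mul_le_mul_of_nonneg_left hQ (sq_nonneg (P.eval x))]

theorem splits_derivative {P : ℝ[X]} (hP : P.Splits) : (derivative P).Splits := by
  rw [splits_iff_card_roots] at hP ⊢
  have rolle := card_roots_le_derivative P
  have roots_le := card_roots' (derivative P)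
  rcases Nat.eq_zero_or_pos P.natDegree with h | h
  · rw [eq_C_of_natDegree_eq_zero h]
    simp
  · have degree_lt := natDegree_derivative_lt h.ne'
    lia

theorem coeff_mul_coeff_add_two_le {P : ℝ[X]} (hP : P.Splits) (j : ℕ) :
    (j + 2) * (P.coeff j * P.coeff (j + 2)) ≤ (j + 1) * P.coeff (j + 1) ^ 2 := by
  induction j generalizing P with
  | zero =>
    have laguerre := eval_mul_eval_derivative_derivative_le_sq hP 0
    simp only [← coeff_zero_eq_eval_zero, coeff_derivative] at laguerre
    norm_num at laguerre ⊢
    linarith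
  | succ j ih =>
    have newton := ih (splits_derivative hP)
    simp only [coeff_derivative] at newton
    push_cast at newton ⊢
    refine le_of_mul_le_mul_left ?_ (by positivity : (0 : ℝ) < (j + 1) * (j + 2))
    linarith

end RealRooted

section ElementarySymmetric

open Polynomial

variable {ι R : Type*} [CommSemiring R]

/-- The `k`-th elementary symmetric function of the coordinates of `x` indexed by `s`. Unlike
`esymm`, it allows coordinates to be deleted by shrinking `s`. -/
def esymmOn (s : Finset ι) (k : ℕ) (x : ι → R) : R :=
  ∑ t ∈ s.powersetCard k, ∏ i ∈ t, x i

/-- The generating polynomial `∏ (1 + xᵢ X)` of the elementary symmetric functions of the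
coordinates of `x` indexed by `s`. -/
def esymmGenPoly (s : Finset ι) (x : ι → R) : R[X] :=
  ∏ i ∈ s, (1 + C (x i) * X)

theorem coeff_esymmGenPoly (s : Finset ι) (x : ι → R) (k : ℕ) :
    (esymmGenPoly s x).coeff k = esymmOn s k x := by
  simp only [esymmGenPoly, esymmOn, Finset.prod_one_add, Finset.prod_mul_distrib,
    Finset.prod_const, ← map_prod, finsetSum_coeff, coeff_C_mul_X_pow,
    Finset.powersetCard_eq_filter, Finset.sum_filter, eq_comm]

@[simp]
theorem esymmOn_zero (s : Finset ι) (x : ι → R) : esymmOn s 0 x = 1 := by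
  simp [esymmOn]

@[simp]
theorem esymmOn_one (s : Finset ι) (x : ι → R) : esymmOn s 1 x = ∑ i ∈ s, x i := by
  simp [esymmOn, Finset.powersetCard_one]

theorem esymmOn_smul (s : Finset ι) (k : ℕ) (c : R) (x : ι → R) :
    esymmOn s k (c • x) = c ^ k * esymmOn s k x := by
  unfold esymmOn
  rw [Finset.mul_sum]
  refine Finset.sum_congr rfl fun t ht => ?_
  simp [Finset.prod_mul_distrib, (Finset.mem_powersetCard.1 ht).2]

theorem esymmOn_univ_comp_perm [Fintype ι] (k : ℕ) (x : ι → R) (σ : Equiv.Perm ι) :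
    esymmOn Finset.univ k (x ∘ σ) = esymmOn Finset.univ k x := by
  simp only [← coeff_esymmGenPoly, esymmGenPoly, Function.comp_apply]
  rw [Equiv.prod_comp σ fun i => 1 + C (x i) * X]

theorem continuous_esymmOn [TopologicalSpace R] [IsTopologicalSemiring R] (s : Finset ι) (k : ℕ) :
    Continuous (esymmOn s k : (ι → R) → R) := by
  unfold esymmOn
  fun_prop

variable [DecidableEq ι]

theorem esymmOn_succ_eq_erase_add {s : Finset ι} {i : ι} (hi : i ∈ s) (k : ℕ) (x : ι → R) :
    esymmOn s (k + 1) x = esymmOn (s.erase i) (k + 1) x + x i * esymmOn (s.erase i) k x := by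
  have factor : esymmGenPoly s x = (1 + C (x i) * X) * esymmGenPoly (s.erase i) x :=
    (Finset.mul_prod_erase s _ hi).symm
  rw [← coeff_esymmGenPoly, factor, add_mul, one_mul, mul_assoc, coeff_add, coeff_C_mul,
    coeff_X_mul, coeff_esymmGenPoly, coeff_esymmGenPoly]

theorem sum_mul_esymmOn_erase (s : Finset ι) (k : ℕ) (x : ι → R) :
    ∑ i ∈ s, x i * esymmOn (s.erase i) k x = (k + 1) * esymmOn s (k + 1) x := by
  have derivative_eq : derivative (esymmGenPoly s x) =
      ∑ i ∈ s, esymmGenPoly (s.erase i) x * C (x i) := by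
    simp [esymmGenPoly, derivative_prod_finset]
  have coeff_eq := congrArg (coeff · k) derivative_eq
  simp only [coeff_derivative, finsetSum_coeff, coeff_mul_C, coeff_esymmGenPoly] at coeff_eq
  rw [mul_comm, coeff_eq]
  exact Finset.sum_congr rfl fun i _ => mul_comm _ _

end ElementarySymmetric

theorem esymmOn_mul_esymmOn_le_sq {ι : Type*} (s : Finset ι) (k : ℕ) (x : ι → ℝ) :
    esymmOn s k x * esymmOn s (k + 2) x ≤ esymmOn s (k + 1) x ^ 2 := by
  have splits : (esymmGenPoly s x).Splits := Polynomial.Splits.prod fun i _ =>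
    .of_natDegree_le_one (by compute_degree)
  have newton := coeff_mul_coeff_add_two_le splits k
  simp only [coeff_esymmGenPoly] at newton
  have hk : (0 : ℝ) < k + 2 := by positivity
  refine le_of_mul_le_mul_left (newton.trans ?_) hk
  gcongr
  norm_num

theorem add_sq_div_le {K : Type*} [Field K] [LinearOrder K] [IsStrictOrderedRing K] {α β γ : K}
    (a b : K) (hα : 0 < α) (hβ : 0 < β) (hγ : α + β ≤ γ) :
    (a + b) ^ 2 / γ ≤ a ^ 2 / α + b ^ 2 / β := by
  have titu : (a + b) ^ 2 / (α + β) ≤ a ^ 2 / α + b ^ 2 / β := by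
    simpa using Finset.sq_sum_div_le_sum_sq_div Finset.univ ![a, b] (g := ![α, β])
      (by simp [Fin.forall_fin_two, hα, hβ])
  have : (a + b) ^ 2 / γ ≤ (a + b) ^ 2 / (α + β) := by gcongr
  exact this.trans titu

/-- The Gårding cone of those `x` whose first `k` elementary symmetric functions, in the coordinates
indexed by `s`, are all positive. The degree `j = 0` is included for uniformity: it imposes
nothing, as `esymmOn s 0 x = 1`. -/
def gardingCone {ι : Type*} (s : Finset ι) (k : ℕ) : Set (ι → ℝ) :=
  {x | ∀ j ≤ k, 0 < esymmOn s j x}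

/-- The ratio `σₖ₊₁ / σₖ` of consecutive elementary symmetric functions, meaningful on
`gardingCone s k`, where the denominator is positive. -/
def esymmRatio {ι : Type*} (s : Finset ι) (k : ℕ) (x : ι → ℝ) : ℝ :=
  esymmOn s (k + 1) x / esymmOn s k x

section GardingCone

variable {ι : Type*} {s : Finset ι} {k : ℕ} {x y : ι → ℝ}

theorem gardingCone_zero (s : Finset ι) : gardingCone s 0 = Set.univ := by
  simp [gardingCone]

theorem gardingCone_succ (s : Finset ι) (k : ℕ) :
    gardingCone s (k + 1) = gardingCone s k ∩ {x | 0 < esymmOn s (k + 1) x} := by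
  ext x
  simp only [gardingCone, Set.mem_inter_iff, Set.mem_ofPred_eq, Nat.le_succ_iff, or_imp,
    forall_and, forall_eq]

theorem gardingCone_antitone (s : Finset ι) : Antitone (gardingCone s) :=
  fun _ _ hkl _ hx j hj => hx j (hj.trans hkl)

theorem isOpen_gardingCone (s : Finset ι) (k : ℕ) : IsOpen (gardingCone s k) := by
  induction k with
  | zero => simp only [gardingCone_zero, isOpen_univ]
  | succ k ih =>
    rw [gardingCone_succ]
    exact ih.inter (isOpen_lt continuous_const (continuous_esymmOn s (k + 1)))

theorem smul_mem_gardingCone (hx : x ∈ gardingCone s k) {c : ℝ} (hc : 0 < c) :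
    c • x ∈ gardingCone s k := fun j hj => by
  rw [esymmOn_smul]
  exact mul_pos (pow_pos hc j) (hx j hj)

theorem comp_perm_mem_gardingCone [Fintype ι] (hx : x ∈ gardingCone Finset.univ k)
    (σ : Equiv.Perm ι) : x ∘ σ ∈ gardingCone Finset.univ k := fun j hj => by
  rw [esymmOn_univ_comp_perm]
  exact hx j hj

theorem mem_gardingCone_of_pos (hk : k ≤ s.card) (hx : ∀ i ∈ s, 0 < x i) : x ∈ gardingCone s k :=
  fun _ hj => Finset.sum_pos
    (fun _ ht => Finset.prod_pos fun i hi => hx i ((Finset.mem_powersetCard.1 ht).1 hi))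
    (Finset.powersetCard_nonempty.2 (hj.trans hk))

theorem sum_pos_of_mem_gardingCone (hk : 1 ≤ k) (hx : x ∈ gardingCone s k) :
    0 < ∑ i ∈ s, x i := by
  simpa using hx 1 hk

theorem esymmOn_succ_le_mul_sum (hx : x ∈ gardingCone s k) :
    esymmOn s (k + 1) x ≤ esymmOn s k x * ∑ i ∈ s, x i := by
  induction k with
  | zero => simp
  | succ k ih =>
    have hx' := gardingCone_antitone s k.le_succ hx
    refine le_of_mul_le_mul_left ?_ (hx' k le_rfl)
    calc esymmOn s k x * esymmOn s (k + 2) x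
        ≤ esymmOn s (k + 1) x * esymmOn s (k + 1) x := by
          simpa only [sq] using esymmOn_mul_esymmOn_le_sq s k x
      _ ≤ esymmOn s (k + 1) x * (esymmOn s k x * ∑ i ∈ s, x i) :=
          mul_le_mul_of_nonneg_left (ih hx') (hx (k + 1) le_rfl).le
      _ = esymmOn s k x * (esymmOn s (k + 1) x * ∑ i ∈ s, x i) := mul_left_comm _ _ _

theorem mem_gardingCone_of_mem_closure (hx : x ∈ closure (gardingCone s k))
    (hpos : 0 < esymmOn s k x) : x ∈ gardingCone s k := by
  induction k with
  | zero => simp only [gardingCone_zero, Set.mem_univ]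
  | succ k ih =>
    have hx' : x ∈ closure (gardingCone s k) :=
      closure_mono (gardingCone_antitone s k.le_succ) hx
    have nonneg : 0 ≤ esymmOn s k x :=
      closure_minimal (fun z hz => (hz k le_rfl).le)
        (isClosed_le continuous_const (continuous_esymmOn s k)) hx'
    have le_mul_sum : esymmOn s (k + 1) x ≤ esymmOn s k x * ∑ i ∈ s, x i :=
      closure_minimal (fun z hz => esymmOn_succ_le_mul_sum hz)
        (isClosed_le (continuous_esymmOn s (k + 1))
          ((continuous_esymmOn s k).mul (by fun_prop))) hx'
    have ne_zero : esymmOn s k x ≠ 0 :=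
      left_ne_zero_of_mul (hpos.trans_le le_mul_sum).ne'
    rw [gardingCone_succ]
    exact ⟨ih hx' (nonneg.lt_of_ne' ne_zero), hpos⟩

theorem esymmRatio_pos (hx : x ∈ gardingCone s (k + 1)) : 0 < esymmRatio s k x :=
  div_pos (hx (k + 1) le_rfl) (hx k k.le_succ)

theorem esymmRatio_zero (s : Finset ι) (x : ι → ℝ) : esymmRatio s 0 x = ∑ i ∈ s, x i := by
  simp [esymmRatio]

theorem add_mem_gardingCone_succ (hx : x ∈ gardingCone s (k + 1)) (hy : y ∈ gardingCone s (k + 1))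
    (hxy : x + y ∈ gardingCone s k)
    (hle : esymmRatio s k x + esymmRatio s k y ≤ esymmRatio s k (x + y)) :
    x + y ∈ gardingCone s (k + 1) := by
  have ratio_pos : 0 < esymmRatio s k (x + y) :=
    (add_pos (esymmRatio_pos hx) (esymmRatio_pos hy)).trans_le hle
  rw [gardingCone_succ]
  exact ⟨hxy, (div_pos_iff_of_pos_right (hxy k le_rfl)).1 ratio_pos⟩

variable [DecidableEq ι]

theorem mem_gardingCone_erase {i : ι} (hi : i ∈ s) (hx : x ∈ gardingCone s (k + 1)) :
    x ∈ gardingCone (s.erase i) k := by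
  induction k with
  | zero => simp only [gardingCone_zero, Set.mem_univ]
  | succ k ih =>
    have hx' := ih (gardingCone_antitone s (k + 1).le_succ hx)
    have newton := esymmOn_mul_esymmOn_le_sq (s.erase i) k x
    have low_pos : 0 < esymmOn (s.erase i) k x := hx' k le_rfl
    have mid_pos := hx (k + 1) (k + 1).le_succ
    have high_pos := hx (k + 2) le_rfl
    rw [esymmOn_succ_eq_erase_add hi] at mid_pos high_pos
    have next_pos : 0 < esymmOn (s.erase i) (k + 1) x := by
      by_contra! nonpos
      linarith [mul_pos high_pos low_pos, mul_nonneg (neg_nonneg.2 nonpos) mid_pos.le]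
    rw [gardingCone_succ]
    exact ⟨hx', next_pos⟩

theorem add_esymmRatio_erase {i : ι} (hi : i ∈ s) (hx : x ∈ gardingCone s (k + 1)) :
    x i + esymmRatio (s.erase i) k x = esymmOn s (k + 1) x / esymmOn (s.erase i) k x := by
  have ne_zero := (mem_gardingCone_erase hi hx k le_rfl).ne'
  rw [esymmRatio, esymmOn_succ_eq_erase_add hi, add_div, mul_div_cancel_right₀ _ ne_zero, add_comm]

theorem add_esymmRatio_erase_pos {i : ι} (hi : i ∈ s) (hx : x ∈ gardingCone s (k + 1)) :
    0 < x i + esymmRatio (s.erase i) k x := by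
  rw [add_esymmRatio_erase hi hx]
  exact div_pos (hx (k + 1) le_rfl) (mem_gardingCone_erase hi hx k le_rfl)

theorem add_two_mul_esymmRatio_succ (hx : x ∈ gardingCone s (k + 1)) :
    (k + 2) * esymmRatio s (k + 1) x =
      ∑ i ∈ s, (x i - x i ^ 2 / (x i + esymmRatio (s.erase i) k x)) := by
  have euler : (k + 2) * esymmOn s (k + 2) x = ∑ i ∈ s, x i * esymmOn (s.erase i) (k + 1) x := by
    rw [sum_mul_esymmOn_erase]
    push_cast
    ring
  rw [esymmRatio, ← mul_div_assoc, euler, Finset.sum_div]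
  refine Finset.sum_congr rfl fun i hi => ?_
  have erase_eq : esymmOn (s.erase i) (k + 1) x =
      esymmOn s (k + 1) x - x i * esymmOn (s.erase i) k x := by
    rw [esymmOn_succ_eq_erase_add hi, add_sub_cancel_right]
  have ne_zero := (hx (k + 1) le_rfl).ne'
  rw [add_esymmRatio_erase hi hx, erase_eq]
  field_simp

theorem esymmRatio_succ_add_le (hx : x ∈ gardingCone s (k + 1)) (hy : y ∈ gardingCone s (k + 1))
    (hxy : x + y ∈ gardingCone s (k + 1))
    (hle : ∀ i ∈ s, esymmRatio (s.erase i) k x + esymmRatio (s.erase i) k y ≤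
      esymmRatio (s.erase i) k (x + y)) :
    esymmRatio s (k + 1) x + esymmRatio s (k + 1) y ≤ esymmRatio s (k + 1) (x + y) := by
  refine le_of_mul_le_mul_left ?_ (by positivity : (0 : ℝ) < k + 2)
  rw [mul_add, add_two_mul_esymmRatio_succ hx, add_two_mul_esymmRatio_succ hy,
    add_two_mul_esymmRatio_succ hxy, ← Finset.sum_add_distrib]
  refine Finset.sum_le_sum fun i hi => ?_
  have denominators_le : (x i + esymmRatio (s.erase i) k x) + (y i + esymmRatio (s.erase i) k y) ≤
      (x + y) i + esymmRatio (s.erase i) k (x + y) := by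
    rw [Pi.add_apply]
    linarith [hle i hi]
  have squares_le := add_sq_div_le (x i) (y i) (add_esymmRatio_erase_pos hi hx)
    (add_esymmRatio_erase_pos hi hy) denominators_le
  simp only [Pi.add_apply] at squares_le ⊢
  linarith

end GardingCone

/-- The **Marcus–Lopes inequality**. -/
theorem add_mem_gardingCone_and_esymmRatio_add_le {ι : Type*} {s : Finset ι} {k : ℕ}
    {x y : ι → ℝ} (hx : x ∈ gardingCone s k) (hy : y ∈ gardingCone s k) :
    x + y ∈ gardingCone s k ∧ esymmRatio s k x + esymmRatio s k y ≤ esymmRatio s k (x + y) := by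
  classical
  induction k generalizing s with
  | zero => simp [gardingCone_zero, esymmRatio_zero, Finset.sum_add_distrib]
  | succ k ih =>
    obtain ⟨hxy, hle⟩ := ih (gardingCone_antitone s k.le_succ hx)
      (gardingCone_antitone s k.le_succ hy)
    have hxy' := add_mem_gardingCone_succ hx hy hxy hle
    exact ⟨hxy', esymmRatio_succ_add_le hx hy hxy' fun i hi =>
      (ih (mem_gardingCone_erase hi hx) (mem_gardingCone_erase hi hy)).2⟩

theorem convex_gardingCone {ι : Type*} (s : Finset ι) (k : ℕ) : Convex ℝ (gardingCone s k) := by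
  rw [convex_iff_forall_pos]
  intro x hx y hy a b ha hb _
  exact (add_mem_gardingCone_and_esymmRatio_add_le (smul_mem_gardingCone hx ha)
    (smul_mem_gardingCone hy hb)).1

theorem connectedComponentIn_esymmOn_pos {ι : Type*} {s : Finset ι} {k : ℕ} {x : ι → ℝ}
    (hx : x ∈ gardingCone s k) :
    connectedComponentIn {y | 0 < esymmOn s k y} x = gardingCone s k := by
  have cone_subset : gardingCone s k ⊆ {y | 0 < esymmOn s k y} := fun y hy => hy k le_rfl
  apply Set.Subset.antisymm
  · refine isPreconnected_connectedComponentIn.subset_of_closure_inter_subset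
      (isOpen_gardingCone s k) ⟨x, mem_connectedComponentIn (cone_subset hx), hx⟩ ?_
    rintro y ⟨hy, hy_comp⟩
    have hy_pos : y ∈ {z | 0 < esymmOn s k z} := connectedComponentIn_subset _ _ hy_comp
    exact mem_gardingCone_of_mem_closure hy hy_pos
  · exact (convex_gardingCone s k).isPreconnected.subset_connectedComponentIn hx cone_subset

theorem gardingCone_univ_eq_setOf_esymm_pos (n k : ℕ) :
    gardingCone (Finset.univ : Finset (Fin n)) k =
      {lam | ∀ j : ℕ, 1 ≤ j → j ≤ k → 0 < esymm n j lam} := by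
  ext lam
  refine ⟨fun h j _ hj => h j hj, fun h j hj => ?_⟩
  rcases j.eq_zero_or_pos with rfl | hj_pos
  · simp
  · exact h j hj_pos hj

theorem stmt10 (n k : ℕ) (hk : 1 ≤ k) (hkn : k ≤ n)
    (Γk : Set (Fin n → ℝ))
    (hΓk : Γk = connectedComponentIn {lam : Fin n → ℝ | 0 < esymm n k lam}
      (fun _ => 1)) :
    Γk = {lam : Fin n → ℝ | ∀ j : ℕ, 1 ≤ j → j ≤ k → 0 < esymm n j lam} ∧
    IsOpen Γk ∧ Convex ℝ Γk ∧
    (∀ lam ∈ Γk, ∀ σ : Equiv.Perm (Fin n), lam ∘ σ ∈ Γk) ∧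
    (∀ lam ∈ Γk, ∀ c : ℝ, 0 < c → c • lam ∈ Γk) ∧
    {lam : Fin n → ℝ | ∀ i, 0 < lam i} ⊆ Γk ∧
    Γk ⊆ {lam : Fin n → ℝ | 0 < ∑ i, lam i} := by
  have pos_subset : {lam : Fin n → ℝ | ∀ i, 0 < lam i} ⊆ gardingCone Finset.univ k :=
    fun lam hlam => mem_gardingCone_of_pos (by simpa using hkn) fun i _ => hlam i
  obtain rfl : Γk = gardingCone Finset.univ k :=
    hΓk.trans (connectedComponentIn_esymmOn_pos (pos_subset fun _ => one_pos))
  exact ⟨gardingCone_univ_eq_setOf_esymm_pos n k, isOpen_gardingCone _ k, convex_gardingCone _ k,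
    fun _ hlam => comp_perm_mem_gardingCone hlam, fun _ hlam _ => smul_mem_gardingCone hlam,
    pos_subset, fun _ => sum_pos_of_mem_gardingCone hk⟩
end
end

section
/- Let n ≥ 3. If u is a positive C² function on ℝⁿ with Δu = 0, then for every x ∈ ℝⁿ, λ > 0, and y with |y-x| ≥ λ, one has u_{x,λ}(y) := (λ/|y-x|)^{n-2}·u(x + λ²(y-x)/|y-x|²) ≤ u(y); consequently u is constant. -/
open scoped BigOperators
noncomputable section

abbrev Euc (n : ℕ) := EuclideanSpace ℝ (Fin n)

/-- First partial derivative of `f` at `x` in direction `i`. -/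
def pd {n : ℕ} (f : Euc n → ℝ) (x : Euc n) (i : Fin n) : ℝ :=
  fderiv ℝ f x (EuclideanSpace.single i 1)

/-- Second partial derivative (Hessian entry) of `f` at `x`. -/
def hess {n : ℕ} (f : Euc n → ℝ) (x : Euc n) (i j : Fin n) : ℝ :=
  fderiv ℝ (fun y => fderiv ℝ f y (EuclideanSpace.single i 1)) x (EuclideanSpace.single j 1)

/-!
The Kelvin transform `u_{x,λ}` of a harmonic function is harmonic away from `x`, because inversion
is conformal and the weight `|y - x|^(2 - n)` cancels the first-order term that conformality leaves
in the Laplacian. It agrees with `u` on the sphere `|y - x| = λ` and, as `n ≥ 3`, tends to `0` at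
infinity, so for `u ≥ 0` the minimum principle outside the ball gives `u_{x,λ} ≤ u` there. Any two
points `y ≠ z` are exchanged by inversions in spheres for which `λ / |y - x|` is as close to `1` as
we like (their centres move off to infinity along the line through `y` and `z`), whence
`u z ≤ u y`, and equality by symmetry.
-/

open Filter Set Metric EuclideanGeometry InnerProductSpace Module
open scoped Topology Laplacian Gradient RealInnerProductSpace

section SecondDerivative

variable {E F G : Type*} [NormedAddCommGroup E] [NormedSpace ℝ E] [NormedAddCommGroup F]
  [NormedSpace ℝ F] [NormedAddCommGroup G] [NormedSpace ℝ G] {x : E}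

theorem differentiableAt_fderiv_of_contDiffAt_two {f : E → F} (hf : ContDiffAt ℝ 2 f x) :
    DifferentiableAt ℝ (fderiv ℝ f) x :=
  (hf.fderiv_right (m := 1) (by norm_num)).differentiableAt (by norm_num)

theorem eventually_differentiableAt_of_contDiffAt_two {f : E → F} (hf : ContDiffAt ℝ 2 f x) :
    ∀ᶠ y in 𝓝 x, DifferentiableAt ℝ f y :=
  (hf.eventually (by simp)).mono fun _ hy ↦ hy.differentiableAt (by norm_num)

theorem fderiv_fderiv_comp {f : F → G} {g : E → F} (hf : ContDiffAt ℝ 2 f (g x))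
    (hg : ContDiffAt ℝ 2 g x) (v w : E) :
    fderiv ℝ (fderiv ℝ (f ∘ g)) x v w =
      fderiv ℝ (fderiv ℝ f) (g x) (fderiv ℝ g x v) (fderiv ℝ g x w) +
        fderiv ℝ f (g x) (fderiv ℝ (fderiv ℝ g) x v w) := by
  have hchain : fderiv ℝ (f ∘ g) =ᶠ[𝓝 x] fun y ↦ (fderiv ℝ f (g y)).comp (fderiv ℝ g y) := by
    filter_upwards [hg.continuousAt.eventually (eventually_differentiableAt_of_contDiffAt_two hf),
      eventually_differentiableAt_of_contDiffAt_two hg] with y hfy hgy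
    exact fderiv_comp y hfy hgy
  have hDf : HasFDerivAt (fun y ↦ fderiv ℝ f (g y))
      ((fderiv ℝ (fderiv ℝ f) (g x)).comp (fderiv ℝ g x)) x :=
    (differentiableAt_fderiv_of_contDiffAt_two hf).hasFDerivAt.comp x
      (hg.differentiableAt (by norm_num)).hasFDerivAt
  have hDg := (differentiableAt_fderiv_of_contDiffAt_two hg).hasFDerivAt
  rw [hchain.fderiv_eq, (hDf.clm_comp hDg).fderiv]
  simp [add_comm]

theorem fderiv_fderiv_smul {f : E → ℝ} {g : E → F} (hf : ContDiffAt ℝ 2 f x)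
    (hg : ContDiffAt ℝ 2 g x) (v w : E) :
    fderiv ℝ (fderiv ℝ (f • g)) x v w =
      f x • fderiv ℝ (fderiv ℝ g) x v w + fderiv ℝ f x v • fderiv ℝ g x w +
        fderiv ℝ f x w • fderiv ℝ g x v + fderiv ℝ (fderiv ℝ f) x v w • g x := by
  have hleibniz : fderiv ℝ (f • g) =ᶠ[𝓝 x]
      fun y ↦ f y • fderiv ℝ g y + (fderiv ℝ f y).smulRight (g y) := by
    filter_upwards [eventually_differentiableAt_of_contDiffAt_two hf,
      eventually_differentiableAt_of_contDiffAt_two hg] with y hfy hgy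
    exact fderiv_smul hfy hgy
  have hf₁ := (hf.differentiableAt (by norm_num)).hasFDerivAt
  have hg₁ := (hg.differentiableAt (by norm_num)).hasFDerivAt
  have hf₂ := (differentiableAt_fderiv_of_contDiffAt_two hf).hasFDerivAt
  have hg₂ := (differentiableAt_fderiv_of_contDiffAt_two hg).hasFDerivAt
  have hsmulRight := (ContinuousLinearMap.smulRightL ℝ E F).hasFDerivAt_of_bilinear hf₂ hg₁
  rw [(((hf₁.fun_smul hg₂).fun_add hsmulRight).congr_of_eventuallyEq hleibniz).fderiv]
  simp only [ContinuousLinearMap.precompR_apply, ContinuousLinearMap.compL_apply, add_apply,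
    smul_apply, ContinuousLinearMap.smulRight_apply, ContinuousLinearMap.comp_apply,
    ContinuousLinearMap.smulRightL_apply_apply, ContinuousLinearMap.precompL_apply]
  abel

theorem deriv_deriv_comp_add_smul {f : E → F} (hf : ContDiffAt ℝ 2 f x) (v : E) :
    deriv (deriv fun t : ℝ ↦ f (x + t • v)) 0 = fderiv ℝ (fderiv ℝ f) x v v := by
  have hline (t : ℝ) : HasDerivAt (fun t : ℝ ↦ x + t • v) v t := by
    simpa using ((hasDerivAt_id t).smul_const v).const_add x
  have hx : x + (0 : ℝ) • v = x := by simp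
  have htendsto : Tendsto (fun t : ℝ ↦ x + t • v) (𝓝 0) (𝓝 x) := by
    simpa [ContinuousAt] using (hline 0).continuousAt
  have hderiv : (deriv fun t : ℝ ↦ f (x + t • v)) =ᶠ[𝓝 0] fun t ↦ fderiv ℝ f (x + t • v) v := by
    filter_upwards [htendsto.eventually (eventually_differentiableAt_of_contDiffAt_two hf)]
      with t ht
    exact (ht.hasFDerivAt.comp_hasDerivAt t (hline t)).deriv
  have hDf : HasFDerivAt (fderiv ℝ f) (fderiv ℝ (fderiv ℝ f) x) (x + (0 : ℝ) • v) := by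
    rw [hx]
    exact (differentiableAt_fderiv_of_contDiffAt_two hf).hasFDerivAt
  have hDf_line : HasDerivAt (fun t : ℝ ↦ fderiv ℝ f (x + t • v))
      (fderiv ℝ (fderiv ℝ f) x v) 0 := hDf.comp_hasDerivAt 0 (hline 0)
  rw [hderiv.deriv_eq]
  simpa using (hDf_line.clm_apply (hasDerivAt_const (0 : ℝ) v)).deriv

theorem deriv_deriv_nonneg_of_isLocalMin {f : ℝ → ℝ} {a : ℝ} (hf : ContinuousAt f a)
    (hmin : IsLocalMin f a) : 0 ≤ deriv (deriv f) a := by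
  by_contra! hneg
  have hmax : IsLocalMax f a := isLocalMax_of_deriv_deriv_neg hneg hmin.deriv_eq_zero hf
  have hconst : f =ᶠ[𝓝 a] fun _ ↦ f a := by
    filter_upwards [hmin, hmax] with t hle hge using le_antisymm hge hle
  have hzero : deriv (deriv f) a = 0 := by
    rw [hconst.deriv.deriv_eq]
    simp
  exact hneg.ne hzero

end SecondDerivative

section Laplacian

variable {E F : Type*} [NormedAddCommGroup E] [InnerProductSpace ℝ E] [FiniteDimensional ℝ E]
  [NormedAddCommGroup F] [NormedSpace ℝ F] {x : E}

theorem laplacian_eq_sum_fderiv_fderiv {ι : Type*} [Fintype ι] (b : OrthonormalBasis ι ℝ E)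
    (f : E → F) (x : E) : Δ f x = ∑ i, fderiv ℝ (fderiv ℝ f) x (b i) (b i) := by
  simp [laplacian_eq_iteratedFDeriv_orthonormalBasis f b, iteratedFDeriv_two_apply]

theorem laplacian_eq_trace_of_hasGradientAt {f : E → ℝ} {grad : E → E} {grad' : E →L[ℝ] E}
    (hf : ∀ᶠ y in 𝓝 x, HasGradientAt f (grad y) y) (hgrad : HasFDerivAt grad grad' x) :
    Δ f x = LinearMap.trace ℝ E grad' := by
  have hfderiv : fderiv ℝ f =ᶠ[𝓝 x] fun y ↦ innerSL ℝ (grad y) := by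
    filter_upwards [hf] with y hy
    ext v
    exact hy.fderiv_apply
  have hD : fderiv ℝ (fderiv ℝ f) x = (innerSL ℝ).comp grad' := by
    rw [hfderiv.fderiv_eq]
    exact ((innerSL ℝ).hasFDerivAt.comp x hgrad).fderiv
  rw [laplacian_eq_sum_fderiv_fderiv (stdOrthonormalBasis ℝ E), hD,
    LinearMap.trace_eq_sum_inner _ (stdOrthonormalBasis ℝ E)]
  simp [real_inner_comm]

theorem laplacian_pi_smul {f : E → ℝ} {g : E → F} (hf : ContDiffAt ℝ 2 f x)
    (hg : ContDiffAt ℝ 2 g x) :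
    Δ (f • g) x = f x • Δ g x + (2 : ℝ) • fderiv ℝ g x (∇ f x) + Δ f x • g x := by
  let b := stdOrthonormalBasis ℝ E
  have hgrad : ∑ i, fderiv ℝ f x (b i) • fderiv ℝ g x (b i) = fderiv ℝ g x (∇ f x) := by
    conv_rhs => rw [← b.sum_repr' (∇ f x)]
    simp [map_sum, inner_gradient_right]
  simp only [laplacian_eq_sum_fderiv_fderiv b, fderiv_fderiv_smul hf hg,
    Finset.sum_add_distrib, ← Finset.smul_sum, ← Finset.sum_smul, hgrad, two_smul, add_assoc]

theorem laplacian_nonneg_of_isLocalMin {f : E → ℝ} (hf : ContDiffAt ℝ 2 f x)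
    (hmin : IsLocalMin f x) : 0 ≤ Δ f x := by
  rw [laplacian_eq_sum_fderiv_fderiv (stdOrthonormalBasis ℝ E)]
  refine Finset.sum_nonneg fun i _ ↦ ?_
  set v := stdOrthonormalBasis ℝ E i
  have hline : ContinuousAt (fun t : ℝ ↦ x + t • v) 0 := by fun_prop
  have hx : x + (0 : ℝ) • v = x := by simp
  rw [← deriv_deriv_comp_add_smul hf]
  refine deriv_deriv_nonneg_of_isLocalMin ?_ ?_
  · exact ContinuousAt.comp (by simpa only [hx] using hf.continuousAt) hline
  · exact IsMinFilter.comp_tendsto (by simpa only [IsLocalMin, hx] using hmin)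
      (by simpa only [ContinuousAt, hx] using hline)

theorem laplacian_norm_sq (x : E) : Δ (fun y : E ↦ ‖y‖ ^ 2) x = 2 * finrank ℝ E := by
  have hgrad (y : E) : HasGradientAt (fun y : E ↦ ‖y‖ ^ 2) ((2 : ℝ) • y) y := by
    rw [hasGradientAt_iff_hasFDerivAt]
    refine (hasStrictFDerivAt_norm_sq y).hasFDerivAt.congr_fderiv ?_
    ext v
    simp
  rw [laplacian_eq_trace_of_hasGradientAt (.of_forall hgrad)
    ((hasFDerivAt_id x).const_smul (2 : ℝ))]
  simp

end Laplacian

section MinimumPrinciple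

variable {E : Type*} [NormedAddCommGroup E] [InnerProductSpace ℝ E] [FiniteDimensional ℝ E]
  {K : Set E} {f : E → ℝ} {m : ℝ} {x : E}

theorem le_of_laplacian_neg_of_le_frontier (hK : IsCompact K) (hf : ContinuousOn f K)
    (hf₂ : ∀ z ∈ interior K, ContDiffAt ℝ 2 f z) (hΔ : ∀ z ∈ interior K, Δ f z < 0)
    (hm : ∀ z ∈ frontier K, m ≤ f z) (hx : x ∈ K) : m ≤ f x := by
  obtain ⟨z, hzK, hmin⟩ := hK.exists_isMinOn ⟨x, hx⟩ hf
  have hz : z ∉ interior K := fun hz ↦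
    (hΔ z hz).not_ge <| laplacian_nonneg_of_isLocalMin (hf₂ z hz) <|
      hmin.isLocalMin (mem_interior_iff_mem_nhds.1 hz)
  exact (hm z ⟨subset_closure hzK, hz⟩).trans (hmin hx)

theorem le_of_laplacian_nonpos_of_le_frontier [Nontrivial E] (hK : IsCompact K)
    (hf : ContinuousOn f K) (hf₂ : ∀ z ∈ interior K, ContDiffAt ℝ 2 f z)
    (hΔ : ∀ z ∈ interior K, Δ f z ≤ 0) (hm : ∀ z ∈ frontier K, m ≤ f z) (hx : x ∈ K) :
    m ≤ f x := by
  obtain ⟨B, hB⟩ := hK.exists_bound_of_continuousOn (f := fun z : E ↦ ‖z‖ ^ 2) (by fun_prop)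
  have hperturb (δ : ℝ) (hδ : 0 < δ) : m - δ * B ≤ (f - δ • fun z : E ↦ ‖z‖ ^ 2) x := by
    have hsq (z : E) : ContDiffAt ℝ 2 (δ • fun z : E ↦ ‖z‖ ^ 2) z :=
      (contDiff_norm_sq ℝ).contDiffAt.const_smul δ
    refine le_of_laplacian_neg_of_le_frontier hK
      (hf.sub fun z _ ↦ (hsq z).continuousAt.continuousWithinAt)
      (fun z hz ↦ (hf₂ z hz).sub (hsq z)) (fun z hz ↦ ?_) (fun z hz ↦ ?_) hx
    · have hdim : (0 : ℝ) < finrank ℝ E := mod_cast finrank_pos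
      rw [(hf₂ z hz).laplacian_sub (hsq z), laplacian_smul δ (contDiff_norm_sq ℝ).contDiffAt,
        laplacian_norm_sq, smul_eq_mul]
      linarith [hΔ z hz, mul_pos hδ hdim]
    · have hzB : ‖z‖ ^ 2 ≤ B := (le_abs_self _).trans (hB z (hK.isClosed.frontier_subset hz))
      simp only [Pi.sub_apply, Pi.smul_apply, smul_eq_mul]
      linarith [hm z hz, mul_le_mul_of_nonneg_left hzB hδ.le]
  have hlim : Tendsto (fun δ : ℝ ↦ f x + δ * B) (𝓝[>] 0) (𝓝 (f x)) :=
    tendsto_nhdsWithin_of_tendsto_nhds <| by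
      simpa using (Continuous.tendsto (by fun_prop : Continuous fun δ : ℝ ↦ f x + δ * B) 0)
  refine ge_of_tendsto hlim ?_
  filter_upwards [self_mem_nhdsWithin] with δ (hδ : 0 < δ)
  have hle : m - δ * B ≤ f x - δ * ‖x‖ ^ 2 := hperturb δ hδ
  linarith [mul_nonneg hδ.le (sq_nonneg ‖x‖)]

theorem le_of_laplacian_nonpos_of_le_frontier_of_eventually_cobounded [Nontrivial E] {S : Set E}
    (hS : IsClosed S) (hf : ContinuousOn f S) (hf₂ : ∀ z ∈ interior S, ContDiffAt ℝ 2 f z)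
    (hΔ : ∀ z ∈ interior S, Δ f z ≤ 0) (hm : ∀ z ∈ frontier S, m ≤ f z)
    (hm_cobounded : ∀ η > 0, ∀ᶠ z in Bornology.cobounded E, m - η ≤ f z) (hx : x ∈ S) :
    m ≤ f x := by
  refine le_of_forall_pos_le_add fun η hη ↦ sub_le_iff_le_add.1 ?_
  obtain ⟨T₀, -, hT₀⟩ :=
    (hasBasis_cobounded_compl_closedBall (0 : E)).eventually_iff.1 (hm_cobounded η hη)
  let T := max (T₀ + 1) ‖x‖
  refine le_of_laplacian_nonpos_of_le_frontier
    ((isCompact_closedBall (0 : E) T).inter_right hS) (hf.mono inter_subset_right)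
    (fun z hz ↦ hf₂ z (interior_mono inter_subset_right hz))
    (fun z hz ↦ hΔ z (interior_mono inter_subset_right hz)) (fun z hz ↦ ?_)
    ⟨by simp [T], hx⟩
  rcases frontier_inter_subset _ _ hz with ⟨hzT, -⟩ | ⟨-, hzS⟩
  · have hT : ‖z‖ = T := mem_sphere_zero_iff_norm.1 (frontier_closedBall_subset_sphere hzT)
    have hT₀z : T₀ < ‖z‖ := hT ▸ (lt_add_one T₀).trans_le (le_max_left _ _)
    exact hT₀ (by simpa using hT₀z)
  · exact (sub_le_self m hη.le).trans (hm z hzS)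

end MinimumPrinciple

section Inversion

variable {E E' F : Type*} [NormedAddCommGroup E] [InnerProductSpace ℝ E]
  [NormedAddCommGroup E'] [InnerProductSpace ℝ E'] [NormedAddCommGroup F] [NormedSpace ℝ F]
  {c x : E} {R : ℝ}

theorem contDiffAt_dist_rpow (hx : x ≠ c) (p : ℝ) :
    ContDiffAt ℝ 2 (fun y ↦ dist y c ^ p) x :=
  (contDiffAt_id.dist ℝ contDiffAt_const hx).rpow_const_of_ne (dist_ne_zero.2 hx)

theorem contDiffAt_inversion (hx : x ≠ c) : ContDiffAt ℝ 2 (inversion c R) x :=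
  contDiffAt_const.inversion contDiffAt_const contDiffAt_id hx

theorem fderiv_comp_inversion_sub {u : E → F} (hx : x ≠ c)
    (hu : DifferentiableAt ℝ u (inversion c R x)) :
    fderiv ℝ (u ∘ inversion c R) x (x - c) =
      -((R / dist x c) ^ 2 • fderiv ℝ u (inversion c R x) (x - c)) := by
  rw [(hu.hasFDerivAt.comp x (hasFDerivAt_inversion hx)).fderiv]
  simp [-map_sub, -neg_sub, Submodule.reflection_orthogonalComplement_singleton_eq_neg]

/-- The Kelvin transform `u_{c,R}` of `u` with respect to the sphere of centre `c` and radius `R`.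
The exponent `finrank ℝ E - 2` is taken in `ℝ`, so it is not truncated in low dimensions. -/
def kelvinTransform (c : E) (R : ℝ) (u : E → F) (y : E) : F :=
  (R / dist y c) ^ ((finrank ℝ E : ℝ) - 2) • u (inversion c R y)

theorem kelvinTransform_eq_smul (hR : 0 ≤ R) (c : E) (u : E → F) :
    kelvinTransform c R u = R ^ ((finrank ℝ E : ℝ) - 2) •
      ((fun y ↦ dist y c ^ (2 - (finrank ℝ E : ℝ))) • (u ∘ inversion c R)) := by
  ext1 y
  have hdist : dist y c ^ (2 - (finrank ℝ E : ℝ)) = (dist y c ^ ((finrank ℝ E : ℝ) - 2))⁻¹ := by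
    rw [← Real.rpow_neg dist_nonneg, neg_sub]
  simp [kelvinTransform, smul_smul, hdist, Real.div_rpow hR dist_nonneg, ← div_eq_mul_inv]

theorem contDiffAt_kelvinTransform {u : E → F} (hR : 0 ≤ R) (hx : x ≠ c)
    (hu : ContDiffAt ℝ 2 u (inversion c R x)) : ContDiffAt ℝ 2 (kelvinTransform c R u) x := by
  rw [kelvinTransform_eq_smul hR]
  exact ((contDiffAt_dist_rpow hx _).smul (hu.comp x (contDiffAt_inversion hx))).const_smul _

variable [FiniteDimensional ℝ E] [FiniteDimensional ℝ E']

theorem hasGradientAt_dist_rpow (hx : x ≠ c) (p : ℝ) :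
    HasGradientAt (fun y ↦ dist y c ^ p) ((p * dist x c ^ (p - 2)) • (x - c)) x := by
  have hpow (y : E) (q : ℝ) : (‖y - c‖ ^ 2) ^ q = dist y c ^ (2 * q) := by
    rw [← Real.rpow_natCast_mul (norm_nonneg _), dist_eq_norm, Nat.cast_ofNat]
  have hx' : ‖x - c‖ ^ 2 ≠ 0 := by simpa [sub_eq_zero] using hx
  have hderiv := ((hasFDerivAt_id x).sub_const c).norm_sq.rpow_const (p := p / 2) (.inl hx')
  simp only [id, hpow, mul_sub, mul_one, mul_div_cancel₀ p (two_ne_zero' ℝ)] at hderiv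
  rw [hasGradientAt_iff_hasFDerivAt]
  refine hderiv.congr_fderiv ?_
  ext v
  simp only [ContinuousLinearMap.comp_id, smul_apply, coe_innerSL_apply, nsmul_eq_mul,
    Nat.cast_ofNat, smul_eq_mul, map_smul, toDual_apply_apply]
  ring

theorem laplacian_dist_rpow (hx : x ≠ c) (p : ℝ) :
    Δ (fun y ↦ dist y c ^ p) x = p * (p + finrank ℝ E - 2) * dist x c ^ (p - 2) := by
  have hgrad : ∀ᶠ y in 𝓝 x, HasGradientAt (fun y ↦ dist y c ^ p)
      ((p * dist y c ^ (p - 2)) • (y - c)) y :=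
    (eventually_ne_nhds hx).mono fun y hy ↦ hasGradientAt_dist_rpow hy p
  have hcoeff := (hasGradientAt_dist_rpow hx (p - 2)).hasFDerivAt.const_mul p
  have hpow : dist x c ^ (p - 2 - 2) * dist x c ^ 2 = dist x c ^ (p - 2) := by
    rw [← Real.rpow_add_natCast (dist_ne_zero.2 hx)]
    norm_num
  have hinner : ⟪x - c, x - c⟫ = dist x c ^ 2 := by
    rw [real_inner_self_eq_norm_sq, dist_eq_norm]
  rw [laplacian_eq_trace_of_hasGradientAt hgrad
    (hcoeff.fun_smul ((hasFDerivAt_id x).sub_const c))]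
  simp only [map_smul, ContinuousLinearMap.toLinearMap_add, ContinuousLinearMap.toLinearMap_smul,
    ContinuousLinearMap.coe_id, ContinuousLinearMap.coe_smulRight, map_add, LinearMap.trace_id,
    smul_eq_mul, LinearMap.trace_smulRight, LinearMap.smul_apply, ContinuousLinearMap.coe_coe,
    toDual_apply_apply]
  linear_combination p * (p - 2) * (hpow + dist x c ^ (p - 2 - 2) * hinner)

theorem laplacian_inversion (hx : x ≠ c) :
    Δ (inversion c R) x = (-2 * (finrank ℝ E - 2) * R ^ 2 / dist x c ^ 4) • (x - c) := by
  have heq : inversion c R =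
      R ^ 2 • ((fun y ↦ dist y c ^ (-2 : ℝ)) • fun y ↦ y - c) + fun _ ↦ c := by
    ext1 y
    simp [inversion, smul_smul, div_eq_mul_inv, mul_pow]
  have hdist := contDiffAt_dist_rpow hx (-2)
  have hsub : ContDiffAt ℝ 2 (fun y ↦ y - c) x := by fun_prop
  have hsmul : ContDiffAt ℝ 2 (R ^ 2 • ((fun y ↦ dist y c ^ (-2 : ℝ)) • fun y ↦ y - c)) x :=
    (hdist.smul hsub).const_smul _
  have hfderiv : fderiv ℝ (fun y ↦ y - c) = fun _ ↦ ContinuousLinearMap.id ℝ E := by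
    ext1 y
    simp [fderiv_sub_const]
  have hpow : dist x c ^ (-2 - 2 : ℝ) = (dist x c ^ 4)⁻¹ := by
    rw [← Real.rpow_natCast, ← Real.rpow_neg dist_nonneg]
    norm_num
  have hΔsub : Δ (fun y ↦ y - c) x = 0 := by
    simp [laplacian_eq_sum_fderiv_fderiv (stdOrthonormalBasis ℝ E), hfderiv]
  have hΔconst : Δ (fun _ : E ↦ c) x = 0 := by
    simp [laplacian_eq_sum_fderiv_fderiv (stdOrthonormalBasis ℝ E)]
  rw [heq, hsmul.laplacian_add contDiffAt_const, laplacian_smul (R ^ 2) (hdist.smul hsub),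
    laplacian_pi_smul hdist hsub, (hasGradientAt_dist_rpow hx _).gradient,
    laplacian_dist_rpow hx, hΔsub, hΔconst, hfderiv, hpow, ContinuousLinearMap.id_apply]
  module

theorem laplacian_comp_of_hasFDerivAt_smul_linearIsometryEquiv {f : E' → F} {g : E → E'} {ρ : ℝ}
    {L : E ≃ₗᵢ[ℝ] E'} (hf : ContDiffAt ℝ 2 f (g x)) (hg : ContDiffAt ℝ 2 g x)
    (hg' : HasFDerivAt g (ρ • (L : E →L[ℝ] E')) x) :
    Δ (f ∘ g) x = ρ ^ 2 • Δ f (g x) + fderiv ℝ f (g x) (Δ g x) := by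
  let b := stdOrthonormalBasis ℝ E
  rw [laplacian_eq_sum_fderiv_fderiv b, laplacian_eq_sum_fderiv_fderiv (b.map L),
    laplacian_eq_sum_fderiv_fderiv b]
  simp [fderiv_fderiv_comp hf hg, hg'.fderiv, Finset.sum_add_distrib, Finset.smul_sum, smul_smul,
    pow_two]

theorem laplacian_comp_inversion {u : E → F} (hx : x ≠ c)
    (hu : ContDiffAt ℝ 2 u (inversion c R x)) :
    Δ (u ∘ inversion c R) x = (R / dist x c) ^ 4 • Δ u (inversion c R x) -
      (2 * (finrank ℝ E - 2) * R ^ 2 / dist x c ^ 4) • fderiv ℝ u (inversion c R x) (x - c) := by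
  rw [laplacian_comp_of_hasFDerivAt_smul_linearIsometryEquiv hu (contDiffAt_inversion hx)
    (hasFDerivAt_inversion hx), laplacian_inversion hx, map_smul]
  module

theorem laplacian_kelvinTransform {u : E → F} (hR : 0 ≤ R) (hx : x ≠ c)
    (hu : ContDiffAt ℝ 2 u (inversion c R x)) :
    Δ (kelvinTransform c R u) x = (R / dist x c) ^ 4 • kelvinTransform c R (Δ u) x := by
  have hdist := contDiffAt_dist_rpow hx (2 - (finrank ℝ E : ℝ))
  have hcomp := hu.comp x (contDiffAt_inversion hx)
  have hd : dist x c ≠ 0 := dist_ne_zero.2 hx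
  have hpow : dist x c ^ (2 - (finrank ℝ E : ℝ) - 2) =
      dist x c ^ (2 - (finrank ℝ E : ℝ)) / dist x c ^ 2 := by
    exact_mod_cast Real.rpow_sub_natCast hd (2 - (finrank ℝ E : ℝ)) 2
  rw [kelvinTransform_eq_smul hR, kelvinTransform_eq_smul hR, laplacian_smul _ (hdist.smul hcomp),
    laplacian_pi_smul hdist hcomp, laplacian_comp_inversion hx hu, laplacian_dist_rpow hx,
    (hasGradientAt_dist_rpow hx _).gradient, map_smul,
    fderiv_comp_inversion_sub hx (hu.differentiableAt (by norm_num)), hpow]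
  simp only [Pi.smul_apply, Pi.smul_apply', Function.comp_apply]
  module

end Inversion

section Comparison

variable {E F : Type*} [NormedAddCommGroup E] [InnerProductSpace ℝ E] [NormedAddCommGroup F]
  [NormedSpace ℝ F] {c x : E} {R : ℝ}

theorem kelvinTransform_of_mem_sphere (hR : R ≠ 0) (hx : x ∈ sphere c R) (u : E → F) :
    kelvinTransform c R u x = u x := by
  rw [kelvinTransform, inversion_of_mem_sphere hx, mem_sphere.1 hx, div_self hR, Real.one_rpow,
    one_smul]

theorem tendsto_kelvinTransform_cobounded (hE : 2 < finrank ℝ E) {u : E → F}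
    (hu : ContinuousAt u c) (R : ℝ) :
    Tendsto (kelvinTransform c R u) (Bornology.cobounded E) (𝓝 0) := by
  have hdist : Tendsto (fun y ↦ dist y c) (Bornology.cobounded E) atTop :=
    tendsto_dist_right_cobounded_atTop c
  have hfactor : Tendsto (fun y ↦ (R / dist y c) ^ ((finrank ℝ E : ℝ) - 2))
      (Bornology.cobounded E) (𝓝 0) := by
    have hpos : 0 < (finrank ℝ E : ℝ) - 2 := sub_pos.2 (mod_cast hE)
    simpa [Real.zero_rpow hpos.ne'] using
      (hdist.const_div_atTop R).rpow_const (p := (finrank ℝ E : ℝ) - 2) (.inr hpos.le)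
  have hinversion : Tendsto (inversion c R) (Bornology.cobounded E) (𝓝 c) := by
    rw [tendsto_iff_dist_tendsto_zero]
    simpa only [dist_inversion_center] using hdist.const_div_atTop (R ^ 2)
  rw [← zero_smul ℝ (u c)]
  exact hfactor.smul (hu.tendsto.comp hinversion)

variable [FiniteDimensional ℝ E]

theorem harmonicAt_kelvinTransform (hR : 0 ≤ R) (hx : x ≠ c) {u : E → F}
    (hu : HarmonicAt u (inversion c R x)) : HarmonicAt (kelvinTransform c R u) x := by
  refine ⟨contDiffAt_kelvinTransform hR hx hu.1, ?_⟩
  filter_upwards [eventually_ne_nhds hx,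
    (contDiffAt_inversion hx).continuousAt.eventually hu.eventually] with y hy huy
  simp [laplacian_kelvinTransform hR hy huy.1, kelvinTransform, huy.2.self_of_nhds]

theorem kelvinTransform_le (hE : 2 < finrank ℝ E) {u : E → ℝ} (hu : HarmonicOnNhd u univ)
    (hu₀ : ∀ y, 0 ≤ u y) (hR : 0 < R) (hx : R ≤ dist x c) : kelvinTransform c R u x ≤ u x := by
  have : Nontrivial E := nontrivial_of_finrank_pos (R := ℝ) (by lia)
  have hdiff (y : E) (hy : y ∈ (ball c R)ᶜ) : HarmonicAt (u - kelvinTransform c R u) y := by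
    have hyc : y ≠ c := by
      rintro rfl
      exact hy (mem_ball_self hR)
    exact (hu y trivial).sub (harmonicAt_kelvinTransform hR.le hyc (hu _ trivial))
  refine sub_nonneg.1 <| le_of_laplacian_nonpos_of_le_frontier_of_eventually_cobounded
    (f := u - kelvinTransform c R u) isOpen_ball.isClosed_compl
    (fun y hy ↦ (hdiff y hy).1.continuousAt.continuousWithinAt)
    (fun y hy ↦ (hdiff y (interior_subset hy)).1)
    (fun y hy ↦ (hdiff y (interior_subset hy)).2.self_of_nhds.le) (fun y hy ↦ ?_)
    (fun η hη ↦ ?_) (show x ∈ (ball c R)ᶜ by simpa using hx)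
  · rw [frontier_compl] at hy
    rw [Pi.sub_apply, kelvinTransform_of_mem_sphere hR.ne' (frontier_ball_subset_sphere hy),
      sub_self]
  · filter_upwards [(tendsto_kelvinTransform_cobounded hE (hu c trivial).1.continuousAt
      R).eventually_le_const hη] with y hy
    exact sub_le_sub (hu₀ y) hy

end Comparison

section MovingSpheres

variable {E : Type*} [NormedAddCommGroup E] [InnerProductSpace ℝ E]

theorem exists_ne_inversion_eq {y z : E} (hyz : y ≠ z) {s : ℝ} (hs : s ^ 2 ≠ 1) :
    ∃ c ≠ y, inversion c (s * dist y c) y = z := by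
  have hs' : 1 - s ^ 2 ≠ 0 := sub_ne_zero.2 hs.symm
  -- `c` solves `z - c = s ^ 2 • (y - c)`, which is what the inversion formula demands.
  let c := (1 - s ^ 2)⁻¹ • (z - s ^ 2 • y)
  have hsub : y - c = (1 - s ^ 2)⁻¹ • (y - z) := by
    simp only [c]
    match_scalars
    · field_simp
      ring
    · ring
  have hcy : y ≠ c := sub_ne_zero.1 <|
    hsub ▸ smul_ne_zero (inv_ne_zero hs') (sub_ne_zero.2 hyz)
  refine ⟨c, hcy.symm, ?_⟩
  rw [inversion, mul_div_cancel_right₀ s (dist_ne_zero.2 hcy), vsub_eq_sub, vadd_eq_add, hsub]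
  simp only [c]
  match_scalars <;> field_simp <;> ring

theorem apply_le_apply_of_forall_inversion_le {f : E → ℝ} {ν : ℝ}
    (hf : ∀ c R y, 0 < R → R ≤ dist y c → (R / dist y c) ^ ν * f (inversion c R y) ≤ f y)
    (y z : E) : f z ≤ f y := by
  obtain rfl | hyz := eq_or_ne y z
  · rfl
  have hlim : Tendsto (fun s : ℝ ↦ s ^ ν * f z) (𝓝[<] 1) (𝓝 (f z)) := by
    have hcont : ContinuousAt (fun s : ℝ ↦ s ^ ν * f z) 1 :=
      (Real.continuousAt_rpow_const 1 ν (.inl one_ne_zero)).mul continuousAt_const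
    simpa using hcont.tendsto.mono_left nhdsWithin_le_nhds
  refine le_of_tendsto hlim ?_
  filter_upwards [Ioo_mem_nhdsLT zero_lt_one] with s hs
  have hs' : s ^ 2 < 1 := pow_lt_one₀ hs.1.le hs.2 two_ne_zero
  obtain ⟨c, hcy, hinv⟩ := exists_ne_inversion_eq hyz hs'.ne
  have hdist : 0 < dist y c := dist_pos.2 hcy.symm
  simpa only [hinv, mul_div_cancel_right₀ s hdist.ne'] using
    hf c (s * dist y c) y (mul_pos hs.1 hdist) (mul_le_of_le_one_left hdist.le hs.2.le)

end MovingSpheres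

theorem sum_hess_eq_laplacian {n : ℕ} {u : Euc n → ℝ} {x : Euc n} (hu : ContDiffAt ℝ 2 u x) :
    ∑ i, hess u x i i = Δ u x := by
  rw [laplacian_eq_sum_fderiv_fderiv (EuclideanSpace.basisFun (Fin n) ℝ)]
  refine Finset.sum_congr rfl fun i _ ↦ ?_
  rw [EuclideanSpace.basisFun_apply, hess,
    fderiv_clm_apply (differentiableAt_fderiv_of_contDiffAt_two hu) (differentiableAt_const _)]
  simp

theorem stmt14_general {E : Type*} [NormedAddCommGroup E] [InnerProductSpace ℝ E]
    [FiniteDimensional ℝ E] (hE : 3 ≤ finrank ℝ E) (u : E → ℝ) (hu : HarmonicOnNhd u univ)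
    (hu₀ : ∀ x, 0 ≤ u x) :
    (∀ (x : E) (lam : ℝ) (y : E), 0 < lam → lam ≤ ‖y - x‖ →
      (lam / ‖y - x‖) ^ ((finrank ℝ E : ℝ) - 2) * u (x + (lam ^ 2 / ‖y - x‖ ^ 2) • (y - x)) ≤
        u y) ∧
    (∀ y z : E, u y = u z) := by
  have hkelvin (c : E) (R : ℝ) (y : E) (hR : 0 < R) (hy : R ≤ dist y c) :
      kelvinTransform c R u y ≤ u y := kelvinTransform_le hE hu hu₀ hR hy
  have hle : ∀ y z, u z ≤ u y := apply_le_apply_of_forall_inversion_le hkelvin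
  refine ⟨fun x lam y hlam hy ↦ ?_, fun y z ↦ le_antisymm (hle z y) (hle y z)⟩
  rw [← dist_eq_norm] at hy ⊢
  simpa [kelvinTransform, inversion, div_pow, add_comm] using hkelvin x lam y hlam hy

theorem stmt14 (n : ℕ) (hn : 3 ≤ n) (u : Euc n → ℝ) (hu : ContDiff ℝ 2 u)
    (hupos : ∀ x, 0 < u x) (hharm : ∀ x, ∑ i, hess u x i i = 0) :
    (∀ (x : Euc n) (lam : ℝ) (y : Euc n), 0 < lam → lam ≤ ‖y - x‖ →
      (lam / ‖y - x‖) ^ ((n:ℝ) - 2) * u (x + (lam^2 / ‖y - x‖^2) • (y - x)) ≤ u y) ∧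
    (∀ y z : Euc n, u y = u z) := by
  have hu' : HarmonicOnNhd u univ := fun x _ ↦ ⟨hu.contDiffAt, .of_forall fun y ↦
    (sum_hess_eq_laplacian hu.contDiffAt).symm.trans (hharm y)⟩
  simpa using stmt14_general (by simpa using hn) u hu' fun x ↦ (hupos x).le
end
end
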